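/- arXiv:1008.4548 — 2 statements merged into one kernel-verified Lean document; each statement's English description precedes it below -/
import Mathlib

section
/- Every infinite traceable graph either contains arbitrarily long finite chordless paths or contains a subgraph isomorphic to the graph A. -/
/-- `G` contains a chordless path on `n` vertices: `n` distinct vertices
`v 0, …, v (n-1)` where `v i` and `v j` are adjacent iff `|i - j| = 1`. -/
def HasChordlessPath {V : Type*} (G : SimpleGraph V) (n : ℕ) : Prop :=
  ∃ v : Fin n → V, Function.Injective v ∧
    ∀ i j : Fin n, G.Adj (v i) (v j) ↔ ((i : ℕ) + 1 = (j : ℕ) ∨ (j : ℕ) + 1 = (i : ℕ))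

/-- The graph `A`: vertices `a_n = Sum.inl n` and `b_m = Sum.inr m`, with an edge
between `a_n` and `b_m` exactly when `n ≤ m`. -/
def graphA : SimpleGraph (ℕ ⊕ ℕ) where
  Adj x y := (∃ n m : ℕ, n ≤ m ∧ x = Sum.inl n ∧ y = Sum.inr m) ∨
             (∃ n m : ℕ, n ≤ m ∧ x = Sum.inr m ∧ y = Sum.inl n)
  symm := by
    constructor
    rintro x y (⟨n, m, h, rfl, rfl⟩ | ⟨n, m, h, rfl, rfl⟩)
    · exact Or.inr ⟨n, m, h, rfl, rfl⟩
    · exact Or.inl ⟨n, m, h, rfl, rfl⟩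
  loopless := by
    constructor
    rintro x (⟨n, m, h, rfl, h2⟩ | ⟨n, m, h, rfl, h2⟩) <;> simp at h2

/-- `G` contains a subgraph isomorphic to `H`. -/
def ContainsCopy {V W : Type*} (G : SimpleGraph V) (H : SimpleGraph W) : Prop :=
  ∃ g : W → V, Function.Injective g ∧ ∀ x y : W, H.Adj x y → G.Adj (g x) (g y)

/-!
Suppose `G` has no chordless path on `N` vertices. Then any `T i` and `T j` are joined by a walk
`w i j` of length less than `N` whose vertices lie among the `T t` with `t` between `i` and `j`, so
these walks leave every finite set as `i` and `j` tend to infinity. Fix a nonprincipal ultrafilter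
and call a vertex adherent if, for most `i` and then most `j`, it has a neighbour on `w i j`.

If infinitely many vertices are adherent, then infinitely many of them have their neighbour at the
same position along the walks. Any finitely many of these have infinitely many common neighbours,
and a greedy choice gives a copy of `A`.

If only finitely many vertices are adherent, we can concatenate walks `w i₀ i₁`, `w i₁ i₂`, … in
such a way that an edge between two of them forces them to be equal or consecutive. A shortest path
inside such a concatenation is chordless, and as long as we like.
-/

open Filter

section ChordlessPath

variable {V W : Type*} {G : SimpleGraph V} {H : SimpleGraph W} {u v : V}

theorem HasChordlessPath.map {n : ℕ} (h : HasChordlessPath G n) (f : G ↪g H) :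
    HasChordlessPath H n := by
  obtain ⟨v, hv, hadj⟩ := h
  exact ⟨f ∘ v, f.injective.comp hv, fun i j => f.map_adj_iff.trans (hadj i j)⟩

theorem HasChordlessPath.mono {m n : ℕ} (h : HasChordlessPath G n) (hmn : m ≤ n) :
    HasChordlessPath G m := by
  obtain ⟨v, hv, hadj⟩ := h
  exact ⟨v ∘ Fin.castLE hmn, hv.comp (Fin.castLE_injective hmn), fun i j => hadj _ _⟩

theorem dist_getVert_of_length_eq_dist {p : G.Walk u v} (hp : p.length = G.dist u v) {i : ℕ}
    (hi : i ≤ p.length) : G.dist u (p.getVert i) = i := by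
  rw [← SimpleGraph.length_eq_dist_of_subwalk hp (p.isSubwalk_take i),
    SimpleGraph.Walk.take_length, min_eq_left hi]

theorem hasChordlessPath_of_length_eq_dist {p : G.Walk u v} (hp : p.length = G.dist u v) :
    HasChordlessPath G (p.length + 1) := by
  have hdist (i : Fin (p.length + 1)) : G.dist u (p.getVert i) = i :=
    dist_getVert_of_length_eq_dist hp (Nat.lt_succ_iff.mp i.isLt)
  refine ⟨fun i => p.getVert i, fun i j hij => Fin.ext ?_, fun i j => ⟨fun hadj => ?_, ?_⟩⟩
  · rw [← hdist i, ← hdist j]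
    exact congrArg (G.dist u) hij
  · have hne : (i : ℕ) ≠ j := fun h => hadj.ne (congrArg p.getVert h)
    have := hadj.diff_dist_adj (u := u)
    rw [hdist, hdist] at this
    omega
  · rintro (h | h)
    · simpa only [h] using p.adj_getVert_succ (i := i) (by omega)
    · simpa only [h] using (p.adj_getVert_succ (i := j) (by omega)).symm

theorem exists_walk_support_subset_hasChordlessPath (p : G.Walk u v) :
    ∃ q : G.Walk u v, q.support ⊆ p.support ∧ HasChordlessPath G (q.length + 1) := by
  let X : Set V := {x | x ∈ p.support}
  obtain ⟨q, hq⟩ := (p.induce X fun _ hx => hx).reachable.exists_walk_length_eq_dist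
  let inclusion := SimpleGraph.Embedding.induce (G := G) X
  have hsupport : (q.map inclusion.toHom).support ⊆ p.support := fun x hx => by
    rw [SimpleGraph.Walk.support_map] at hx
    obtain ⟨y, -, rfl⟩ := List.mem_map.mp hx
    exact y.2
  have hchordless : HasChordlessPath G ((q.map inclusion.toHom).length + 1) := by
    rw [SimpleGraph.Walk.length_map]
    exact (hasChordlessPath_of_length_eq_dist hq).map inclusion
  exact ⟨q.map inclusion.toHom, hsupport, hchordless⟩

theorem exists_walk_length_lt_of_not_hasChordlessPath {N : ℕ} (hN : ¬ HasChordlessPath G N)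
    (p : G.Walk u v) : ∃ q : G.Walk u v, q.length < N ∧ q.support ⊆ p.support := by
  obtain ⟨q, hqp, hq⟩ := exists_walk_support_subset_hasChordlessPath p
  refine ⟨q, ?_, hqp⟩
  by_contra! hlen
  exact hN (hq.mono (by omega))

end ChordlessPath

section CopyOfA

variable {V : Type*} {G : SimpleGraph V}

theorem containsCopy_graphA_of_adj {a b : ℕ → V} (ha : Function.Injective a)
    (hb : Function.Injective b) (hab : ∀ m n, a m ≠ b n) (hadj : ∀ m n, m ≤ n → G.Adj (a m) (b n)) :
    ContainsCopy G graphA := by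
  refine ⟨Sum.elim a b, ha.sumElim hb hab, ?_⟩
  rintro x y (⟨n, m, h, rfl, rfl⟩ | ⟨n, m, h, rfl, rfl⟩)
  · exact hadj n m h
  · exact (hadj n m h).symm

theorem exists_adj_notMem_of_infinite_commonNeighbors {S : Set V} (hS : S.Infinite)
    (hcommon : ∀ F : Finset V, ↑F ⊆ S → {y | ∀ x ∈ F, G.Adj x y}.Infinite)
    {F : Finset V} (hF : ↑F ⊆ S) (used : Finset V) :
    ∃ a ∈ S, ∃ b, a ∉ used ∧ b ∉ used ∧ G.Adj a b ∧ ∀ x ∈ F, G.Adj x b := by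
  classical
  obtain ⟨a, haS, ha⟩ := hS.exists_notMem_finset used
  have hsub : ↑(insert a F) ⊆ S := by
    rw [Finset.coe_insert]
    exact Set.insert_subset haS hF
  obtain ⟨b, hadj, hb⟩ := (hcommon _ hsub).exists_notMem_finset used
  exact ⟨a, haS, b, ha, hb, hadj a (Finset.mem_insert_self _ _),
    fun x hx => hadj x (Finset.mem_insert_of_mem hx)⟩

theorem containsCopy_graphA_of_infinite_commonNeighbors {S : Set V} (hS : S.Infinite)
    (hcommon : ∀ F : Finset V, ↑F ⊆ S → {y | ∀ x ∈ F, G.Adj x y}.Infinite) :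
    ContainsCopy G graphA := by
  classical
  obtain ⟨f, hf, hfresh⟩ := exists_seq_of_forall_finset_exists
    (fun p : V × V => p.1 ∈ S ∧ G.Adj p.1 p.2)
    (fun p q : V × V => (p.1 ≠ q.1 ∧ p.2 ≠ q.1) ∧ (p.1 ≠ q.2 ∧ p.2 ≠ q.2) ∧ G.Adj p.1 q.2) <| by
      intro s hs
      have hfirst : ↑(s.image Prod.fst) ⊆ S := by
        rw [Finset.coe_image]
        exact Set.image_subset_iff.mpr fun p hp => (hs p hp).1
      obtain ⟨a, haS, b, ha, hb, hab, hadj⟩ := exists_adj_notMem_of_infinite_commonNeighbors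
        hS hcommon hfirst (s.image Prod.fst ∪ s.image Prod.snd)
      have hne {x : V} (hx : x ∉ s.image Prod.fst ∪ s.image Prod.snd) :
          ∀ p ∈ s, p.1 ≠ x ∧ p.2 ≠ x := by
        grind
      exact ⟨(a, b), ⟨haS, hab⟩, fun p hp =>
        ⟨hne ha p hp, hne hb p hp, hadj p.1 (Finset.mem_image_of_mem _ hp)⟩⟩
  have hadj (m n : ℕ) (hmn : m ≤ n) : G.Adj (f m).1 (f n).2 := by
    rcases hmn.eq_or_lt with rfl | hlt
    · exact (hf m).2
    · exact (hfresh m n hlt).2.2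
  refine containsCopy_graphA_of_adj (.of_lt_imp_ne fun m n h => (hfresh m n h).1.1)
    (.of_lt_imp_ne fun m n h => (hfresh m n h).2.1.2) (fun m n => ?_) hadj
  rcases le_or_gt m n with hle | hlt
  · exact (hadj m n hle).ne
  · exact (hfresh n m hlt).1.2.symm

theorem containsCopy_graphA_of_infinite_eventually_adj {κ : Type*} {U : Filter κ} [U.NeBot]
    {y : κ → V} (hy : Tendsto y U cofinite) (hinf : {x | ∀ᶠ z in U, G.Adj x (y z)}.Infinite) :
    ContainsCopy G graphA := by
  refine containsCopy_graphA_of_infinite_commonNeighbors hinf fun F hF hfin => ?_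
  have hadj : ∀ᶠ z in U, ∀ x ∈ F, G.Adj x (y z) := (eventually_all_finset F).mpr hF
  have hmiss : ∀ᶠ z in U, y z ∉ {y | ∀ x ∈ F, G.Adj x y} := hy.eventually hfin.compl_mem_cofinite
  obtain ⟨z, hz, hz'⟩ := (hadj.and hmiss).exists
  exact hz' hz

theorem containsCopy_graphA_of_infinite_eventually_exists_adj {κ σ : Type*} [Finite σ]
    {U : Ultrafilter κ} {y : σ → κ → V} (hy : ∀ s, Tendsto (y s) U cofinite)
    (hinf : {x | ∀ᶠ z in U, ∃ s, G.Adj x (y s z)}.Infinite) : ContainsCopy G graphA := by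
  have hunion : {x | ∀ᶠ z in U, ∃ s, G.Adj x (y s z)} = ⋃ s, {x | ∀ᶠ z in U, G.Adj x (y s z)} := by
    ext x
    simp only [Set.mem_ofPred_eq, Set.mem_iUnion, Ultrafilter.eventually_exists_iff]
  obtain ⟨s, hs⟩ : ∃ s, {x | ∀ᶠ z in U, G.Adj x (y s z)}.Infinite := by
    by_contra! hfin
    exact hinf (hunion ▸ Set.finite_iUnion hfin)
  exact containsCopy_graphA_of_infinite_eventually_adj (hy s) hs

end CopyOfA

section GradedWalk

variable {V : Type*} {G : SimpleGraph V} {a b c : V}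

theorem le_add_length_of_adj_le_succ {φ : V → ℕ} (p : G.Walk a b)
    (hφ : ∀ x ∈ p.support, ∀ y ∈ p.support, G.Adj x y → φ y ≤ φ x + 1) :
    φ b ≤ φ a + p.length := by
  induction p with
  | nil => simp
  | cons hadj p ih =>
    have hstep := hφ _ (by simp) _ (by simp) hadj
    have := ih fun x hx y hy => hφ x (by simp [hx]) y (by simp [hy])
    rw [SimpleGraph.Walk.length_cons]
    omega

/-- A grading of a walk: a level function on its vertices that starts at `0`, is maximal at the end
of the walk, and goes up by at most one along every edge of `G` between two vertices of the walk. It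
certifies that the end is far from the start in the subgraph induced on the vertices of the walk. -/
structure IsGrading (p : G.Walk a b) (φ : V → ℕ) : Prop where
  start : φ a = 0
  le_end : ∀ x ∈ p.support, φ x ≤ φ b
  adj_le_succ : ∀ x ∈ p.support, ∀ y ∈ p.support, G.Adj x y → φ y ≤ φ x + 1

namespace IsGrading

variable {p : G.Walk a b} {φ : V → ℕ}

theorem hasChordlessPath (h : IsGrading p φ) : HasChordlessPath G (φ b + 1) := by
  obtain ⟨q, hqp, hq⟩ := exists_walk_support_subset_hasChordlessPath p
  have hlen := le_add_length_of_adj_le_succ q fun x hx y hy =>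
    h.adj_le_succ x (hqp hx) y (hqp hy)
  rw [h.start, zero_add] at hlen
  exact hq.mono (by omega)

theorem exists_append (h : IsGrading p φ) (q : G.Walk b c) (hc : c ∉ p.support)
    (hq : ∀ x ∈ p.support, φ x < φ b → ∀ y ∈ q.support, ¬ G.Adj x y) :
    ∃ ψ, IsGrading (p.append q) ψ ∧ ψ c = φ b + 1 ∧
      ∀ x ∈ (p.append q).support, ψ x < ψ c → x ∈ p.support := by
  classical
  let ψ : V → ℕ := fun x => if x ∈ p.support then φ x else φ b + 1
  have hold {x : V} (hx : x ∈ p.support) : ψ x = φ x := if_pos hx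
  have hnew {x : V} (hx : x ∉ p.support) : ψ x = φ b + 1 := if_neg hx
  have hle (x : V) : ψ x ≤ φ b + 1 := by
    by_cases hx : x ∈ p.support
    · rw [hold hx]
      exact (h.le_end x hx).trans (Nat.le_succ _)
    · exact (hnew hx).le
  refine ⟨ψ, ⟨(hold p.start_mem_support).trans h.start, fun x _ => (hnew hc).symm ▸ hle x, ?_⟩,
    hnew hc, fun x _ hlt => ?_⟩
  · intro x _ y hy hadj
    by_cases hxp : x ∈ p.support
    · by_cases hyp : y ∈ p.support
      · rw [hold hxp, hold hyp]
        exact h.adj_le_succ x hxp y hyp hadj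
      · have hyq : y ∈ q.support := (p.mem_support_append_iff q).mp hy |>.resolve_left hyp
        have hxb : φ b ≤ φ x := by
          by_contra! hlt
          exact hq x hxp hlt y hyq hadj
        rw [hold hxp, hnew hyp]
        omega
    · rw [hnew hxp]
      exact (hle y).trans (Nat.le_succ _)
  · by_contra hx
    exact hlt.ne ((hnew hx).trans (hnew hc).symm)

end IsGrading

end GradedWalk

section EscapingWalks

variable {V ι : Type*} {G : SimpleGraph V} {T : ι → V}

/-- The walks `w i j` escape along `U` if each vertex is avoided by `w i j` for `U`-most `i` and
then `U`-most `j`, where "most" may depend on the vertex, and on `i` in the case of `j`. -/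
def IsEscaping (U : Filter ι) (w : ∀ i j, G.Walk (T i) (T j)) : Prop :=
  ∀ x, ∀ᶠ i in U, ∀ᶠ j in U, x ∉ (w i j).support

/-- The vertices that keep having a neighbour on `w i j` as `j`, and after it `i`, runs along
`U`. -/
def adherentVertices (U : Filter ι) (w : ∀ i j, G.Walk (T i) (T j)) : Set V :=
  {x | ∃ᶠ i in U, ∃ᶠ j in U, ∃ y ∈ (w i j).support, G.Adj x y}

theorem notMem_adherentVertices_iff {U : Filter ι} {w : ∀ i j, G.Walk (T i) (T j)} {x : V} :
    x ∉ adherentVertices U w ↔ ∀ᶠ i in U, ∀ᶠ j in U, ∀ y ∈ (w i j).support, ¬ G.Adj x y := by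
  simp only [adherentVertices, Set.mem_ofPred_eq, not_frequently, not_exists, not_and]

namespace IsEscaping

section

variable {U : Filter ι} {w : ∀ i j, G.Walk (T i) (T j)}

theorem eventually_notMem_of_finite (hw : IsEscaping U w) {F : Set V} (hF : F.Finite) :
    ∀ᶠ i in U, ∀ᶠ j in U, ∀ x ∈ (w i j).support, x ∉ F := by
  have h : ∀ᶠ i in U, ∀ x ∈ F, ∀ᶠ j in U, x ∉ (w i j).support :=
    hF.eventually_all.mpr fun x _ => hw x
  filter_upwards [h] with i hi
  filter_upwards [hF.eventually_all.mpr hi] with j hj x hx hxF using hj x hxF hx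

variable [U.NeBot]

theorem tendsto_cofinite (hw : IsEscaping U w) : Tendsto T U cofinite := by
  refine le_cofinite_iff_eventually_ne.mpr fun x => ?_
  obtain ⟨i, hi⟩ := (hw x).exists
  exact eventually_map.mpr (hi.mono fun j hj h => hj (h ▸ (w i j).end_mem_support))

/-- The walk is a concatenation of `m` of the walks `w i j`. The last three conditions are what
the induction needs to append one more walk `w k j`, for most `j`. -/
theorem exists_isGrading (hw : IsEscaping U w) (hfin : (adherentVertices U w).Finite) (m : ℕ) :
    ∃ i k, ∃ p : G.Walk (T i) (T k), ∃ φ, IsGrading p φ ∧ φ (T k) = m ∧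
      (∀ x ∈ p.support, x ∉ adherentVertices U w) ∧
      (∀ᶠ j in U, ∀ x ∈ (w k j).support, x ∉ adherentVertices U w) ∧
      ∀ᶠ j in U, ∀ x ∈ p.support, φ x < m → ∀ y ∈ (w k j).support, ¬ G.Adj x y := by
  have havoid := hw.eventually_notMem_of_finite hfin
  induction m with
  | zero =>
    obtain ⟨i, hi⟩ := havoid.exists
    obtain ⟨j, hj⟩ := hi.exists
    refine ⟨i, i, .nil, fun _ => 0, ⟨rfl, by simp, by simp⟩, rfl, ?_, hi, by simp⟩
    simpa using hj _ (w i j).start_mem_support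
  | succ m ih =>
    obtain ⟨i, k, p, φ, hφ, hm, hp, hk, hsep⟩ := ih
    have hlater : ∀ᶠ j in U, ∀ x ∈ p.support,
        ∀ᶠ l in U, ∀ y ∈ (w j l).support, ¬ G.Adj x y :=
      p.support.finite_toSet.eventually_all.mpr fun x hx =>
        notMem_adherentVertices_iff.mp (hp x hx)
    have hfresh : ∀ᶠ j in U, T j ∉ p.support :=
      hw.tendsto_cofinite.eventually p.support.finite_toSet.compl_mem_cofinite
    obtain ⟨j, hsep_j, hkj, hlater_j, havoid_j, hfresh_j⟩ :=
      (hsep.and (hk.and (hlater.and (havoid.and hfresh)))).exists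
    obtain ⟨ψ, hψ, hψj, hψlt⟩ := hφ.exists_append (w k j) hfresh_j (hm ▸ hsep_j)
    rw [hm] at hψj
    refine ⟨i, j, p.append (w k j), ψ, hψ, hψj, fun x hx => ?_, havoid_j, ?_⟩
    · exact ((p.mem_support_append_iff _).mp hx).elim (hp x) (hkj x)
    · filter_upwards [p.support.finite_toSet.eventually_all.mpr hlater_j] with l hl x hx hlt
      exact hl x (hψlt x hx (hψj ▸ hlt))

theorem hasChordlessPath (hw : IsEscaping U w) (hfin : (adherentVertices U w).Finite) (n : ℕ) :
    HasChordlessPath G n := by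
  obtain ⟨i, k, p, φ, hφ, hn, -⟩ := hw.exists_isGrading hfin n
  exact hφ.hasChordlessPath.mono (by omega)

end

theorem containsCopy_graphA {U : Ultrafilter ι} {w : ∀ i j, G.Walk (T i) (T j)}
    (hw : IsEscaping U w) {N : ℕ} (hN : ∀ i j, (w i j).length < N)
    (hinf : (adherentVertices U w).Infinite) : ContainsCopy G graphA := by
  let U₂ : Ultrafilter (ι × ι) := U.bind fun i => U.map (Prod.mk i)
  let y : Fin N → ι × ι → V := fun s z => (w z.1 z.2).getVert s
  have hU₂ {P : ι × ι → Prop} : (∀ᶠ z in U₂, P z) ↔ ∀ᶠ i in U, ∀ᶠ j in U, P (i, j) := Iff.rfl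
  have hy (s : Fin N) : Tendsto (y s) U₂ cofinite := by
    refine le_cofinite_iff_eventually_ne.mpr fun x => hU₂.mpr ?_
    filter_upwards [hw x] with i hi
    filter_upwards [hi] with j hj h using hj (h ▸ (w i j).getVert_mem_support s)
  refine containsCopy_graphA_of_infinite_eventually_exists_adj hy (hinf.mono fun x hx => ?_)
  simp only [adherentVertices, Set.mem_ofPred_eq, Ultrafilter.frequently_iff_eventually] at hx
  refine hU₂.mpr ?_
  filter_upwards [hx] with i hi
  filter_upwards [hi] with j hj
  obtain ⟨z, hz, hadj⟩ := hj
  obtain ⟨s, rfl, hs⟩ := SimpleGraph.Walk.mem_support_iff_exists_getVert.mp hz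
  exact ⟨⟨s, hs.trans_lt (hN i j)⟩, hadj⟩

end IsEscaping

end EscapingWalks

section Ray

variable {V : Type*} {G : SimpleGraph V} {T : ℕ → V}

theorem exists_walk_support_subset_image_uIcc (hT : ∀ i, G.Adj (T i) (T (i + 1))) (i j : ℕ) :
    ∃ p : G.Walk (T i) (T j), ∀ x ∈ p.support, x ∈ T '' Set.uIcc i j := by
  wlog hij : i ≤ j generalizing i j
  · obtain ⟨p, hp⟩ := this j i (le_of_not_ge hij)
    exact ⟨p.reverse, by simpa [Set.uIcc_comm] using hp⟩
  simp only [Set.uIcc_of_le hij]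
  induction j, hij using Nat.le_induction with
  | base => exact ⟨.nil, by simp⟩
  | succ j hij ih =>
    obtain ⟨p, hp⟩ := ih
    refine ⟨p.concat (hT j), fun x hx => ?_⟩
    rw [SimpleGraph.Walk.support_concat, List.mem_append, List.mem_singleton] at hx
    rcases hx with hx | rfl
    · exact Set.image_mono (Set.Icc_subset_Icc_right j.le_succ) (hp x hx)
    · exact ⟨j + 1, ⟨by omega, le_rfl⟩, rfl⟩

theorem isEscaping_of_support_subset_image_uIcc (hfin : Tendsto T cofinite cofinite)
    {U : Filter ℕ} (hU : U ≤ atTop) {w : ∀ i j, G.Walk (T i) (T j)}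
    (hw : ∀ i j, ∀ x ∈ (w i j).support, x ∈ T '' Set.uIcc i j) : IsEscaping U w := by
  intro x
  have hx : ∀ᶠ t in atTop, T t ≠ x :=
    Nat.cofinite_eq_atTop ▸ le_cofinite_iff_eventually_ne.mp hfin x
  obtain ⟨B, hB⟩ := eventually_atTop.mp hx
  have hlarge : ∀ᶠ i in U, B ≤ i := hU (eventually_ge_atTop B)
  filter_upwards [hlarge] with i hi
  filter_upwards [hlarge] with j hj hmem
  obtain ⟨t, ht, rfl⟩ := hw i j x hmem
  exact hB t ((le_inf hi hj).trans ht.1) rfl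

end Ray

theorem traceable_chordless_or_copy_of_A_general {V : Type*} (G : SimpleGraph V) (T : ℕ → V)
    (hfin : Tendsto T cofinite cofinite) (hT : ∀ i : ℕ, G.Adj (T i) (T (i + 1))) :
    (∀ n : ℕ, HasChordlessPath G n) ∨ ContainsCopy G graphA := by
  by_cases! hchordless : ∀ n, HasChordlessPath G n
  · exact .inl hchordless
  obtain ⟨N, hN⟩ := hchordless
  have hwalk (i j : ℕ) : ∃ w : G.Walk (T i) (T j),
      w.length < N ∧ ∀ x ∈ w.support, x ∈ T '' Set.uIcc i j := by
    obtain ⟨p, hp⟩ := exists_walk_support_subset_image_uIcc hT i j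
    obtain ⟨q, hlen, hqp⟩ := exists_walk_length_lt_of_not_hasChordlessPath hN p
    exact ⟨q, hlen, fun x hx => hp x (hqp hx)⟩
  choose w hlen hw using hwalk
  have hesc : IsEscaping (hyperfilter ℕ) w :=
    isEscaping_of_support_subset_image_uIcc hfin Nat.hyperfilter_le_atTop hw
  rcases (adherentVertices (hyperfilter ℕ : Filter ℕ) w).finite_or_infinite with hadh | hadh
  · exact .inl (hesc.hasChordlessPath hadh)
  · exact .inr (hesc.containsCopy_graphA hlen hadh)

/-- Every infinite traceable graph either contains arbitrarily long finite chordless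
paths or contains a subgraph isomorphic to the graph `A`. -/
theorem traceable_chordless_or_copy_of_A {V : Type*} (G : SimpleGraph V)
    (T : ℕ ≃ V) (hT : ∀ i : ℕ, G.Adj (T i) (T (i + 1))) :
    (∀ n : ℕ, HasChordlessPath G n) ∨ ContainsCopy G graphA := by
  exact traceable_chordless_or_copy_of_A_general G T T.injective.tendsto_cofinite hT
end

section
/- For every injective function f : ℕ → ℕ there exists a graph G with vertex set ℕ such that: (i) n and n+1 are adjacent in G for every n ∈ ℕ (so G is traceable via the identity); (ii) G contains no chordless 4-path; and (iii) for every injective map g from the vertices of the graph A into ℕ such that adjacent vertices of A are mapped to adjacent vertices of G, and for every k ∈ ℕ, k is in the range of f if and only if there exists x ≤ max{g(a_i) : i ≤ k} with f(x) = k. -/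
/-!
Join `a` and `b` when the minimum of `f` on the interval between them is attained at an endpoint.
This is the comparability graph of the Cartesian tree of `f`, and the comparability graph of a tree
has no chordless 4-path. If `n` has infinitely many neighbours, then `f n` is the minimum of `f` on
arbitrarily long intervals `[n, m]`, since only finitely many `m` have `f m ≤ f n`; so `n` is a true
stage of `f`. Every `a_i` has infinite degree, so its image is a true stage. If the `k + 1` distinct
stages `g (a_i)` with `i ≤ k` all preceded an `x` with `f x = k`, then `f` would take `k + 1`
distinct values below `k` on them.
-/

theorem not_hasChordlessPath_four_fromRel {V : Type*} {r : V → V → Prop} [IsTrans V r]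
    (comparable : ∀ a b c, r a c → r b c → r a b ∨ r b a) :
    ¬ HasChordlessPath (SimpleGraph.fromRel r) 4 := by
  have adj_of_rel {a b c : V} (hab : r a b) (hbc : (SimpleGraph.fromRel r).Adj b c)
      (hac : a ≠ c) : (SimpleGraph.fromRel r).Adj a c :=
    ⟨hac, hbc.2.elim (fun hbc ↦ Or.inl (_root_.trans hab hbc)) (comparable a c b hab)⟩
  rintro ⟨v, hv, hadj⟩
  have adj_01 := (hadj 0 1).2 (by simp)
  have adj_12 := (hadj 1 2).2 (by simp)
  have adj_23 := (hadj 2 3).2 (by simp)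
  have not_adj_13 : ¬ (SimpleGraph.fromRel r).Adj (v 1) (v 3) := (hadj 1 3).not.2 (by simp)
  have not_adj_20 : ¬ (SimpleGraph.fromRel r).Adj (v 2) (v 0) := (hadj 2 0).not.2 (by simp)
  rcases adj_12.2 with rel_12 | rel_21
  · exact not_adj_13 (adj_of_rel rel_12 adj_23 (hv.ne (by decide)))
  · exact not_adj_20 (adj_of_rel rel_21 adj_01.symm (hv.ne (by decide)))

section Dominates

variable {α β : Type*} [LinearOrder α]

/-- `Dominates f a b`: on the interval between `a` and `b`, in whichever order they come, `f` is
minimal at `a`. For injective `f` on `ℕ` this says that `a` is an ancestor of `b`, or `b` itself,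
in the Cartesian tree of `f`. -/
def Dominates [Preorder β] (f : α → β) (a b : α) : Prop :=
  IsMinOn f (Set.uIcc a b) a

theorem Dominates.of_le [Preorder β] {f : α → β} {a b c : α} (hac : Dominates f a c)
    (hbc : Dominates f b c) (hab : f a ≤ f b) : Dominates f a b := by
  intro x hx
  rcases Set.uIcc_subset_uIcc_union_uIcc (b := c) hx with hx | hx
  · exact hac hx
  · exact hab.trans (hbc (Set.uIcc_comm c b ▸ hx))

instance Dominates.instIsTrans [Preorder β] (f : α → β) : IsTrans α (Dominates f) where
  trans a b c hab hbc x hx := by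
    rcases Set.uIcc_subset_uIcc_union_uIcc (b := b) hx with hx | hx
    · exact hab hx
    · exact (hab Set.right_mem_uIcc).trans (hbc hx)

variable [LinearOrder β] {f : α → β}

theorem Dominates.comparable {a b c : α} (hac : Dominates f a c) (hbc : Dominates f b c) :
    Dominates f a b ∨ Dominates f b a :=
  (le_total (f a) (f b)).imp (hac.of_le hbc) (hbc.of_le hac)

/-- The comparability graph of domination: two points are adjacent when `f` attains its minimum on
the interval between them at one of the two. -/
def dominanceGraph (f : α → β) : SimpleGraph α :=
  SimpleGraph.fromRel (Dominates f)

theorem not_hasChordlessPath_four_dominanceGraph (f : α → β) :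
    ¬ HasChordlessPath (dominanceGraph f) 4 :=
  not_hasChordlessPath_four_fromRel fun _ _ _ ↦ Dominates.comparable

theorem dominanceGraph_adj_of_covBy (f : α → β) {a b : α} (hab : a ⋖ b) :
    (dominanceGraph f).Adj a b := by
  refine ⟨hab.ne, ?_⟩
  have uIcc_eq : Set.uIcc a b = {a, b} := by rw [Set.uIcc_of_le hab.le, hab.Icc_eq]
  simpa [Dominates, isMinOn_iff, Set.uIcc_comm b a, uIcc_eq] using le_total (f a) (f b)

end Dominates

section IsTrueStage

variable {α β : Type*}

/-- `n` is a true stage of `f` (in the sense of computability theory) if all later values of `f`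
exceed `f n`. -/
def IsTrueStage [LT α] [LT β] (f : α → β) (n : α) : Prop :=
  ∀ m, n < m → f n < f m

theorem strictMonoOn_setOf_isTrueStage [Preorder α] [Preorder β] (f : α → β) :
    StrictMonoOn f {n | IsTrueStage f n} :=
  fun _ hn m _ hnm ↦ hn m hnm

variable [LinearOrder α]

theorem exists_le_apply_of_isTrueStage {f : α → ℕ} {t : ℕ → α} (ht : Function.Injective t)
    (hft : ∀ i, IsTrueStage f (t i)) (x : α) : ∃ i ≤ f x, x ≤ t i := by
  by_contra! hlt
  have maps_to : ∀ i ∈ Finset.range (f x + 1), f (t i) ∈ Finset.range (f x) := fun i hi ↦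
    Finset.mem_range.2 (hft i x (hlt i (Finset.mem_range_succ_iff.1 hi)))
  have injective : Function.Injective fun i ↦ f (t i) := fun i j hij ↦
    ht ((strictMonoOn_setOf_isTrueStage f).injOn (hft i) (hft j) hij)
  simpa using Finset.card_le_card_of_injOn _ maps_to injective.injOn

theorem isTrueStage_of_infinite_neighborSet [LocallyFiniteOrderBot α] [LinearOrder β]
    [LocallyFiniteOrderBot β] {f : α → β} (hf : Function.Injective f) {n : α}
    (hn : ((dominanceGraph f).neighborSet n).Infinite) : IsTrueStage f n := by
  intro k hnk
  have finite_excluded : (Set.Iic k ∪ f ⁻¹' Set.Iic (f n)).Finite :=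
    (Set.finite_Iic k).union ((Set.finite_Iic (f n)).preimage hf.injOn)
  obtain ⟨m, hadj, hm⟩ := hn.exists_notMem_finite finite_excluded
  obtain ⟨hkm, hfm⟩ : k < m ∧ f n < f m := by simpa using hm
  have dominates : Dominates f n m :=
    hadj.2.resolve_right fun h ↦ hfm.not_ge (h Set.right_mem_uIcc)
  exact (dominates (Set.mem_uIcc_of_le hnk.le hkm.le)).lt_of_ne (hf.ne hnk.ne)

end IsTrueStage

theorem infinite_neighborSet_graphA_inl (n : ℕ) : (graphA.neighborSet (Sum.inl n)).Infinite := by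
  refine ((Set.Ici_infinite n).image Sum.inr_injective.injOn).mono ?_
  rintro _ ⟨m, hnm, rfl⟩
  exact Or.inl ⟨n, m, hnm, rfl, rfl⟩

/-- For every injective `f : ℕ → ℕ` there is a graph `G` on `ℕ`, traceable via the
identity and with no chordless 4-path, such that from any embedding `g` of the graph
`A` into `G` one can decide membership in the range of `f`: `k` is in the range of
`f` iff `f x = k` for some `x ≤ max {g(a_i) : i ≤ k}`. -/
theorem exists_graph_coding_range_via_A (f : ℕ → ℕ) (hf : Function.Injective f) :
    ∃ G : SimpleGraph ℕ,
      (∀ n : ℕ, G.Adj n (n + 1)) ∧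
      ¬ HasChordlessPath G 4 ∧
      ∀ g : ℕ ⊕ ℕ → ℕ, Function.Injective g →
        (∀ x y : ℕ ⊕ ℕ, graphA.Adj x y → G.Adj (g x) (g y)) →
        ∀ k : ℕ, (∃ x : ℕ, f x = k) ↔
          ∃ x ≤ (Finset.range (k + 1)).sup (fun i => g (Sum.inl i)), f x = k := by
  refine ⟨dominanceGraph f, fun n ↦ dominanceGraph_adj_of_covBy f (Order.covBy_add_one n),
    not_hasChordlessPath_four_dominanceGraph f, fun g hg hadj k ↦ ⟨?_, ?_⟩⟩
  · rintro ⟨x, rfl⟩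
    have isTrueStage_apply (i : ℕ) : IsTrueStage f (g (Sum.inl i)) := by
      refine isTrueStage_of_infinite_neighborSet hf
        (((infinite_neighborSet_graphA_inl i).image hg.injOn).mono ?_)
      rintro _ ⟨y, hy, rfl⟩
      exact hadj _ _ hy
    obtain ⟨i, hi, hxi⟩ :=
      exists_le_apply_of_isTrueStage (hg.comp Sum.inl_injective) isTrueStage_apply x
    exact ⟨x, hxi.trans (Finset.le_sup (f := fun i ↦ g (Sum.inl i))
      (Finset.mem_range_succ_iff.2 hi)), rfl⟩
  · rintro ⟨x, -, hx⟩
    exact ⟨x, hx⟩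
end
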